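/- arXiv:2602.05790 — 4 statements merged into one kernel-verified Lean document; each statement's English description precedes it below -/
import Mathlib

section
/- Fix D* ∈ [0.005, 0.995], ε ∈ (0, D*), f_n = (D* − ε)/(2n), and k ∈ {0, 1, …, n}. Let F_k be the set of λ ∈ ℝ₊ⁿ with Σᵢ λᵢ = n such that, writing t = t_wf(λ, D*) (the water level with D_wf(λ, t) = D*), one has λᵢ ≥ t + ε f_n for all i ≤ k and 0 ≤ λᵢ ≤ t − ε f_n for all i > k. If λ* maximizes G(λ) = 𝐑_rc(λ, D*) − 𝐑_wf(λ, D*) over F_k, then λ*_{k+1} = λ*_{k+2} = … = λ*_n. -/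
open Real

/-- Waterfilling distortion `D_wf(λ, t) = (1/n) Σᵢ min{λᵢ, t}`. -/
noncomputable def Dwf {n : ℕ} (lam : Fin n → ℝ) (t : ℝ) : ℝ :=
  (1 / (n : ℝ)) * ∑ i, min (lam i) t

/-- Waterfilling rate `R_wf(λ, t) = (1/(2n)) Σᵢ max{0, log₂(λᵢ/t)}`. -/
noncomputable def Rwf {n : ℕ} (lam : Fin n → ℝ) (t : ℝ) : ℝ :=
  (1 / (2 * (n : ℝ))) * ∑ i, max 0 (Real.logb 2 (lam i / t))

/-- Random-coding distortion `D_rc(λ, T) = (1/n) Σᵢ λᵢ/(1 + λᵢ T)`. -/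
noncomputable def Drc {n : ℕ} (lam : Fin n → ℝ) (T : ℝ) : ℝ :=
  (1 / (n : ℝ)) * ∑ i, lam i / (1 + lam i * T)

/-- Random-coding rate `R_rc(λ, T) = (1/(2n)) Σᵢ log₂(1 + λᵢ T)`. -/
noncomputable def Rrc {n : ℕ} (lam : Fin n → ℝ) (T : ℝ) : ℝ :=
  (1 / (2 * (n : ℝ))) * ∑ i, Real.logb 2 (1 + lam i * T)

/-- `t_wf(λ, D)`: the water level `t > 0` with `D_wf(λ, t) = D`. -/
noncomputable def twfD {n : ℕ} (lam : Fin n → ℝ) (D : ℝ) : ℝ :=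
  Classical.epsilon fun t => 0 < t ∧ Dwf lam t = D

/-- `𝐑_wf(λ, D) = R_wf(λ, t_wf(λ, D))`. -/
noncomputable def RRwf {n : ℕ} (lam : Fin n → ℝ) (D : ℝ) : ℝ :=
  Rwf lam (twfD lam D)

/-- `T > 0` solving `D_rc(λ, T) = D`. -/
noncomputable def TrcD {n : ℕ} (lam : Fin n → ℝ) (D : ℝ) : ℝ :=
  Classical.epsilon fun T => 0 < T ∧ Drc lam T = D

/-- `𝐑_rc(λ, D) = R_rc(λ, T)` where `T > 0` solves `D_rc(λ, T) = D`. -/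
noncomputable def RRrc {n : ℕ} (lam : Fin n → ℝ) (D : ℝ) : ℝ :=
  Rrc lam (TrcD lam D)

/-- The feasible set `F_k`: spectra with trace `n` whose first `k` coordinates are
at least `t_wf(λ, D*) + ε f_n` (active set) and whose remaining coordinates are at
most `t_wf(λ, D*) - ε f_n` (inactive set), with `f_n = (D* - ε)/(2n)`.
(Indices of `Fin n` are 0-based: `i ≤ k` in 1-based notation is `(i : ℕ) < k`.) -/
def Fk (n : ℕ) (k : ℕ) (Dstar ε : ℝ) (lam : Fin n → ℝ) : Prop :=
  (∀ i, 0 ≤ lam i) ∧ (∑ i, lam i) = (n : ℝ) ∧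
  (∀ i : Fin n, (i : ℕ) < k →
    twfD lam Dstar + ε * ((Dstar - ε) / (2 * (n : ℝ))) ≤ lam i) ∧
  (∀ i : Fin n, k ≤ (i : ℕ) →
    lam i ≤ twfD lam Dstar - ε * ((Dstar - ε) / (2 * (n : ℝ))))


lemma exists_twf {n : ℕ} (hn : 1 ≤ n) (lam : Fin n → ℝ) (h0 : ∀ i, 0 ≤ lam i)
    (hs : ∑ i, lam i = (n : ℝ)) (D : ℝ) (hD0 : 0 < D) (hD1 : D < 1) :
    ∃ t, 0 < t ∧ Dwf lam t = D := by
  have hnpos : (0 : ℝ) < n := by exact_mod_cast hn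
  have hc : Continuous (fun t => Dwf lam t) := by
    unfold Dwf; fun_prop
  have e0 : Dwf lam 0 = 0 := by
    unfold Dwf
    have : ∀ i, min (lam i) 0 = 0 := fun i => min_eq_right (h0 i)
    simp [this]
  have e1 : Dwf lam (n : ℝ) = 1 := by
    unfold Dwf
    have : ∀ i, min (lam i) (n : ℝ) = lam i := fun i => by
      apply min_eq_left
      rw [← hs]
      exact Finset.single_le_sum (fun j _ => h0 j) (Finset.mem_univ i)
    simp only [this, hs]
    field_simp
  have := intermediate_value_Icc hnpos.le hc.continuousOn
  obtain ⟨t, ht, hte⟩ := this (show D ∈ Set.Icc _ _ from ⟨by simp only [e0]; exact hD0.le, by simp only [e1]; exact hD1.le⟩)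
  refine ⟨t, lt_of_le_of_ne ht.1 ?_, hte⟩
  rintro rfl
  simp only [e0] at hte
  exact hD0.ne hte

lemma exists_Trc {n : ℕ} (hn : 1 ≤ n) (lam : Fin n → ℝ) (h0 : ∀ i, 0 ≤ lam i)
    (hs : ∑ i, lam i = (n : ℝ)) (D : ℝ) (hD0 : 0 < D) (hD1 : D < 1) :
    ∃ T, 0 < T ∧ Drc lam T = D := by
  have hnpos : (0 : ℝ) < n := by exact_mod_cast hn
  have hc : ContinuousOn (fun t => Drc lam t) (Set.Icc 0 (1 / D)) := by
    unfold Drc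
    refine continuousOn_const.mul (continuousOn_finsetSum _ fun i _ => ?_)
    refine continuousOn_const.div (by fun_prop) ?_
    intro x hx
    have := mul_nonneg (h0 i) hx.1
    positivity
  have e0 : Drc lam 0 = 1 := by
    unfold Drc
    simp [hs]
    field_simp
  have e1 : Drc lam (1 / D) ≤ D := by
    unfold Drc
    have : ∑ i, lam i / (1 + lam i * (1 / D)) ≤ ∑ i : Fin n, D := by
      refine Finset.sum_le_sum fun i _ => ?_
      have h := h0 i
      have : 0 < 1 + lam i * (1 / D) := by positivity
      rw [div_le_iff₀ this]
      have : D * (1 + lam i * (1 / D)) = D + lam i := by field_simp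
      linarith
    simp only [Finset.sum_const, Finset.card_univ, Fintype.card_fin, nsmul_eq_mul] at this
    calc _ ≤ (1 / (n : ℝ)) * (n * D) := by gcongr
      _ = D := by field_simp
  have := intermediate_value_Icc' (by positivity) hc
  obtain ⟨t, ht, hte⟩ := this (show D ∈ Set.Icc _ _ from ⟨e1, by simp only [e0]; exact hD1.le⟩)
  refine ⟨t, lt_of_le_of_ne ht.1 ?_, hte⟩
  rintro rfl
  simp only [e0] at hte
  exact hD1.ne hte.symm

lemma twf_unique_aux {n : ℕ} (hn : 1 ≤ n) (lam : Fin n → ℝ)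
    (hs : ∑ i, lam i = (n : ℝ)) (D : ℝ) (hD1 : D < 1) (s t : ℝ) (hst : s < t)
    (h1 : Dwf lam s = D) : D < Dwf lam t := by
  have hnpos : (0 : ℝ) < n := by exact_mod_cast hn
  have hex : ∃ i, s < lam i := by
    by_contra! hcon
    have : ∀ i, min (lam i) s = lam i := fun i => min_eq_left (hcon i)
    unfold Dwf at h1
    simp only [this, hs] at h1
    field_simp at h1
    linarith
  obtain ⟨i, hi⟩ := hex
  rw [← h1]
  unfold Dwf
  refine mul_lt_mul_of_pos_left ?_ (by positivity)
  refine Finset.sum_lt_sum (fun j _ => min_le_min le_rfl hst.le) ⟨i, Finset.mem_univ i, ?_⟩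
  rw [min_eq_right hi.le]
  exact lt_min hi hst

lemma twf_eq {n : ℕ} (hn : 1 ≤ n) (lam : Fin n → ℝ)
    (hs : ∑ i, lam i = (n : ℝ)) (D : ℝ) (hD1 : D < 1) (t : ℝ) (ht : 0 < t)
    (h1 : Dwf lam t = D) : twfD lam D = t := by
  have hsp : 0 < twfD lam D ∧ Dwf lam (twfD lam D) = D :=
    Classical.epsilon_spec (p := fun t => 0 < t ∧ Dwf lam t = D) ⟨t, ht, h1⟩
  rcases lt_trichotomy (twfD lam D) t with h | h | h
  · have := twf_unique_aux hn lam hs D hD1 _ _ h hsp.2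
    linarith
  · exact h
  · have := twf_unique_aux hn lam hs D hD1 _ _ h h1
    linarith [hsp.2]

lemma Drc_strict {n : ℕ} (hn : 1 ≤ n) (lam : Fin n → ℝ) (h0 : ∀ i, 0 ≤ lam i)
    (hs : ∑ i, lam i = (n : ℝ)) (S T : ℝ) (hS : 0 < S) (hST : S < T) :
    Drc lam T < Drc lam S := by
  have hnpos : (0 : ℝ) < n := by exact_mod_cast hn
  have hex : ∃ i, 0 < lam i := by
    by_contra! hcon
    have := Finset.sum_nonpos (fun i (_ : i ∈ Finset.univ) => hcon i)
    linarith
  obtain ⟨i, hi⟩ := hex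
  unfold Drc
  have hT := hS.trans hST
  refine mul_lt_mul_of_pos_left ?_ (by positivity)
  refine Finset.sum_lt_sum (fun j _ => ?_) ⟨i, Finset.mem_univ i, ?_⟩
  · have := h0 j
    gcongr
  · gcongr

lemma sum_avg {n : ℕ} (lam : Fin n → ℝ) (i j : Fin n) (hij : i ≠ j) (m : ℝ) (f : ℝ → ℝ) :
    ∑ l, f (if l = i ∨ l = j then m else lam l)
      = ∑ l, f (lam l) + (2 * f m - f (lam i) - f (lam j)) := by
  have : ∀ l, f (if l = i ∨ l = j then m else lam l)
      = f (lam l) + ((if l = i then f m - f (lam i) else 0)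
        + (if l = j then f m - f (lam j) else 0)) := by
    intro l
    by_cases h1 : l = i
    · subst h1; simp [hij]
    · by_cases h2 : l = j
      · subst h2; simp [h1]
      · simp [h1, h2]
  simp only [this, Finset.sum_add_distrib, Finset.sum_ite_eq', Finset.mem_univ, if_true]
  ring

lemma tangent (x m T : ℝ) (hx : 0 ≤ x) (hm : 0 ≤ m) (hT : 0 < T) :
    x / (1 + x * T) ≤ m / (1 + m * T) + (x - m) / (1 + m * T) ^ 2 := by
  have h1 : 0 < 1 + x * T := by positivity
  have h2 : 0 < 1 + m * T := by positivity
  have : m / (1 + m * T) + (x - m) / (1 + m * T) ^ 2 - x / (1 + x * T)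
      = (x - m) ^ 2 * T / ((1 + x * T) * (1 + m * T) ^ 2) := by
    field_simp
    ring
  have h3 : 0 ≤ (x - m) ^ 2 * T / ((1 + x * T) * (1 + m * T) ^ 2) := by positivity
  linarith

/-- at a maximizer of `G(λ) = 𝐑_rc(λ, D*) - 𝐑_wf(λ, D*)` over `F_k`,
the inactive-set eigenvalues are all equal. -/
theorem stmt_14 (n : ℕ) (hn : 1 ≤ n) (Dstar ε : ℝ)
    (hD : Dstar ∈ Set.Icc (0.005 : ℝ) 0.995) (hε : ε ∈ Set.Ioo (0 : ℝ) Dstar)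
    (k : ℕ) (hk : k ≤ n) (lamStar : Fin n → ℝ)
    (hmem : Fk n k Dstar ε lamStar)
    (hmax : ∀ lam : Fin n → ℝ, Fk n k Dstar ε lam →
      RRrc lam Dstar - RRwf lam Dstar ≤ RRrc lamStar Dstar - RRwf lamStar Dstar) :
    ∀ i j : Fin n, k ≤ (i : ℕ) → k ≤ (j : ℕ) → lamStar i = lamStar j := by
  intro i j hi hj
  by_contra hne
  have hij : i ≠ j := fun h => hne (by rw [h])
  have hnpos : (0 : ℝ) < n := by exact_mod_cast hn
  have hD0 : 0 < Dstar := hε.1.trans hε.2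
  have hD1 : Dstar < 1 := by have := hD.2; norm_num at this ⊢; linarith
  obtain ⟨h0, hs, hact, hin⟩ := hmem
  have hsp : 0 < twfD lamStar Dstar ∧ Dwf lamStar (twfD lamStar Dstar) = Dstar :=
    Classical.epsilon_spec (p := fun t => 0 < t ∧ Dwf lamStar t = Dstar)
      (exists_twf hn lamStar h0 hs Dstar hD0 hD1)
  have hTsp : 0 < TrcD lamStar Dstar ∧ Drc lamStar (TrcD lamStar Dstar) = Dstar :=
    Classical.epsilon_spec (p := fun T => 0 < T ∧ Drc lamStar T = Dstar)
      (exists_Trc hn lamStar h0 hs Dstar hD0 hD1)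
  have hdel : 0 < ε * ((Dstar - ε) / (2 * (n : ℝ))) := by
    have h1 := hε.1
    have h2 : 0 < Dstar - ε := by linarith [hε.2]
    positivity
  have hai := hin i hi
  have haj := hin j hj
  have hi0 := h0 i
  have hj0 := h0 j
  obtain ⟨m, hm⟩ : ∃ m, m = (lamStar i + lamStar j) / 2 := ⟨_, rfl⟩
  have hm0 : 0 ≤ m := by rw [hm]; positivity
  have hsum := sum_avg lamStar i j hij m
  obtain ⟨lam, hlam⟩ : ∃ lam : Fin n → ℝ,
      lam = fun l => if l = i ∨ l = j then m else lamStar l := ⟨_, rfl⟩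
  have hsum' : ∀ f : ℝ → ℝ, ∑ l, f (lam l)
      = ∑ l, f (lamStar l) + (2 * f m - f (lamStar i) - f (lamStar j)) := by
    intro f; rw [← hsum f, hlam]
  have hs' : ∑ l, lam l = (n : ℝ) := by
    have := hsum' (fun x => x)
    rw [this, hs, hm]; ring
  have h0' : ∀ l, 0 ≤ lam l := by
    intro l; rw [hlam]; dsimp only; split_ifs
    · exact hm0
    · exact h0 l
  have ht : Dwf lam (twfD lamStar Dstar) = Dstar := by
    refine Eq.trans ?_ hsp.2
    unfold Dwf
    have := hsum' (fun x => min x (twfD lamStar Dstar))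
    rw [this, min_eq_left (show m ≤ _ by linarith), min_eq_left (show lamStar i ≤ _ by linarith),
      min_eq_left (show lamStar j ≤ _ by linarith), hm]
    ring
  have htw := twf_eq hn lam hs' Dstar hD1 _ hsp.1 ht
  have hF : Fk n k Dstar ε lam := by
    refine ⟨h0', hs', ?_, ?_⟩
    · intro l hl
      rw [htw, hlam]
      have h1 : l ≠ i := by rintro rfl; omega
      have h2 : l ≠ j := by rintro rfl; omega
      simp only [h1, h2, or_self, if_false]
      exact hact l hl
    · intro l hl
      rw [htw, hlam]
      dsimp only
      split_ifs
      · linarith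
      · exact hin l hl
  have hRwf : RRwf lam Dstar = RRwf lamStar Dstar := by
    unfold RRwf
    rw [htw]
    unfold Rwf
    have hz : ∀ x, 0 ≤ x → x ≤ twfD lamStar Dstar →
        max 0 (Real.logb 2 (x / twfD lamStar Dstar)) = 0 := by
      intro x hx hxt
      apply max_eq_left
      apply Real.logb_nonpos (by norm_num) (div_nonneg hx hsp.1.le)
      rw [div_le_one hsp.1]; exact hxt
    have := hsum' (fun x => max 0 (Real.logb 2 (x / twfD lamStar Dstar)))
    rw [this, hz m hm0 (by linarith), hz _ hi0 (by linarith), hz _ hj0 (by linarith)]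
    ring
  have hTsp' : 0 < TrcD lam Dstar ∧ Drc lam (TrcD lam Dstar) = Dstar :=
    Classical.epsilon_spec (p := fun T => 0 < T ∧ Drc lam T = Dstar)
      (exists_Trc hn lam h0' hs' Dstar hD0 hD1)
  have hmx := hmax lam hF
  rw [hRwf] at hmx
  unfold RRrc at hmx
  generalize TrcD lamStar Dstar = T at *
  generalize TrcD lam Dstar = T' at *
  obtain ⟨hT, hDT⟩ := hTsp
  obtain ⟨hT', hDT'⟩ := hTsp'
  have hge : Dstar ≤ Drc lam T := by
    rw [← hDT]
    unfold Drc
    refine mul_le_mul_of_nonneg_left ?_ (by positivity)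
    have := hsum' (fun x => x / (1 + x * T))
    rw [this]
    have e1 := tangent (lamStar i) m T hi0 hm0 hT
    have e2 := tangent (lamStar j) m T hj0 hm0 hT
    have e3 : (lamStar i - m) / (1 + m * T) ^ 2 + (lamStar j - m) / (1 + m * T) ^ 2 = 0 := by
      rw [← add_div, hm]; ring
    linarith
  have hTT : T ≤ T' := by
    by_contra! hlt
    have := Drc_strict hn lam h0' hs' T' T hT' hlt
    linarith
  have hR1 : Rrc lam T ≤ Rrc lam T' := by
    unfold Rrc
    refine mul_le_mul_of_nonneg_left (Finset.sum_le_sum fun l _ => ?_) (by positivity)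
    have := h0' l
    apply Real.logb_le_logb_of_le (by norm_num) (by positivity)
    gcongr
  have hR2 : Rrc lamStar T < Rrc lam T := by
    unfold Rrc
    refine mul_lt_mul_of_pos_left ?_ (by positivity)
    have := hsum' (fun x => Real.logb 2 (1 + x * T))
    rw [this]
    have p1 : 0 < 1 + lamStar i * T := by positivity
    have p2 : 0 < 1 + lamStar j * T := by positivity
    have p3 : 0 < 1 + m * T := by positivity
    have key : (1 + lamStar i * T) * (1 + lamStar j * T) < (1 + m * T) * (1 + m * T) := by
      have hsq : 0 < (lamStar i - lamStar j) ^ 2 * T ^ 2 := by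
        have : lamStar i - lamStar j ≠ 0 := sub_ne_zero.mpr hne
        positivity
      rw [hm]; nlinarith
    have := Real.logb_lt_logb (b := 2) (by norm_num) (by positivity) key
    rw [Real.logb_mul p1.ne' p2.ne', Real.logb_mul p3.ne' p3.ne'] at this
    linarith
  linarith
end

section
/- Let n ≥ 1 and 1 ≤ m ≤ n, and let λ ∈ ℝⁿ have exactly m coordinates equal to n/m and the remaining n − m coordinates equal to 0 (a semi-flat spectrum). Then for every D ∈ (0, 1): 𝐑_rc(λ, D) = 𝐑_wf(λ, D) = (m/(2n)) log₂(1/D). In other words, the random-coding and waterfilling rate-distortion tradeoffs coincide for all semi-flat spectra. -/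
open Real

/-- for a semi-flat spectrum (exactly `m` eigenvalues equal to `n/m`,
the rest `0`), the random-coding and waterfilling tradeoffs coincide:
`𝐑_rc(λ, D) = 𝐑_wf(λ, D) = (m/(2n)) log₂(1/D)` for every `D ∈ (0,1)`. -/
theorem stmt_16 (n m : ℕ) (hn : 1 ≤ n) (hm : 1 ≤ m) (hmn : m ≤ n)
    (lam : Fin n → ℝ)
    (hvals : ∀ i, lam i = (n : ℝ) / (m : ℝ) ∨ lam i = 0)
    (hcard : Nat.card {i : Fin n // lam i = (n : ℝ) / (m : ℝ)} = m)
    (D : ℝ) (hD : D ∈ Set.Ioo (0 : ℝ) 1) :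
    RRrc lam D = RRwf lam D ∧
    RRrc lam D = ((m : ℝ) / (2 * (n : ℝ))) * Real.logb 2 (1 / D) := by
  obtain ⟨hD0, hD1⟩ := hD
  have hn0 : (0 : ℝ) < n := by exact_mod_cast hn
  have hm0 : (0 : ℝ) < m := by exact_mod_cast hm
  obtain ⟨a, ha⟩ : ∃ a : ℝ, a = (n : ℝ) / (m : ℝ) := ⟨_, rfl⟩
  rw [← ha] at hvals hcard
  have ha0 : 0 < a := by rw [ha]; positivity
  have hma : (m : ℝ) * a = n := by rw [ha]; field_simp
  have hsum : ∀ f : ℝ → ℝ, f 0 = 0 → ∑ i, f (lam i) = m * f a := by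
    intro f hf
    classical
    have h1 : ∀ i, f (lam i) = if lam i = a then f a else 0 := by
      intro i
      rcases hvals i with h | h
      · simp [h]
      · rw [h, hf, if_neg ha0.ne]
    rw [Finset.sum_congr rfl (fun i _ => h1 i), ← Finset.sum_filter, Finset.sum_const,
      nsmul_eq_mul]
    rw [Nat.card_eq_fintype_card, Fintype.card_subtype] at hcard
    rw [hcard]
  have hDrc : ∀ T, 0 < T → Drc lam T = 1 / (1 + a * T) := by
    intro T hT
    have hp : 0 < 1 + a * T := by positivity
    unfold Drc
    rw [hsum (fun x => x / (1 + x * T)) (by simp), ← hma]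
    field_simp
  have hDwf : ∀ t, 0 < t → Dwf lam t = (m / n) * min a t := by
    intro t ht
    unfold Dwf
    rw [hsum (fun x => min x t) (by simp [ht.le])]
    ring
  have hT : 0 < TrcD lam D ∧ Drc lam (TrcD lam D) = D := by
    apply Classical.epsilon_spec (p := fun T => 0 < T ∧ Drc lam T = D)
    have h : 0 < (1 / D - 1) / a := by
      apply div_pos _ ha0
      have := one_lt_one_div hD0 hD1
      linarith
    refine ⟨_, h, ?_⟩
    rw [hDrc _ h, mul_div_cancel₀ _ ha0.ne']
    simp
  have ht : 0 < twfD lam D ∧ Dwf lam (twfD lam D) = D := by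
    apply Classical.epsilon_spec (p := fun t => 0 < t ∧ Dwf lam t = D)
    have h : 0 < a * D := by positivity
    refine ⟨_, h, ?_⟩
    rw [hDwf _ h, min_eq_right (by nlinarith), ← hma]
    field_simp
  have hR : RRrc lam D = ((m : ℝ) / (2 * (n : ℝ))) * Real.logb 2 (1 / D) := by
    obtain ⟨h0, h1⟩ := hT
    rw [hDrc _ h0] at h1
    unfold RRrc Rrc
    rw [hsum (fun x => Real.logb 2 (1 + x * TrcD lam D)) (by simp)]
    have h2 : 1 / D = 1 + a * TrcD lam D := by
      conv_lhs => rw [← h1]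
      rw [one_div_one_div]
    rw [h2]
    ring
  have hW : RRwf lam D = ((m : ℝ) / (2 * (n : ℝ))) * Real.logb 2 (1 / D) := by
    obtain ⟨h0, h1⟩ := ht
    rw [hDwf _ h0] at h1
    have h2 : min a (twfD lam D) = a * D := by
      rw [← hma] at h1
      field_simp at h1
      linarith
    have h3 : twfD lam D = a * D := by
      rcases min_choice a (twfD lam D) with h | h
      · rw [h] at h2; nlinarith
      · rw [← h, h2]
    unfold RRwf Rwf
    rw [hsum (fun x => max 0 (Real.logb 2 (x / twfD lam D))) (by simp), h3]
    have h4 : a / (a * D) = 1 / D := by field_simp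
    rw [h4, max_eq_right (Real.logb_nonneg (by norm_num) (one_lt_one_div hD0 hD1).le)]
    ring
  exact ⟨hR.trans hW.symm, hR⟩
end

section
/- Fix a rate R* > 0 and set R_nat = R* ln 2. Let λ ∈ ℝⁿ with λⱼ ≥ 0 and Σⱼ λⱼ = n, let W̃ ∈ ℝⁿ, let T = T_rc(λ, R*), and let τ = (T Σⱼ W̃ⱼ² λⱼ²/(1 + λⱼT)²)^{1/2} · (Σⱼ λⱼ/(1 + λⱼT))^{−1/2}. Then Σⱼ ( 4 W̃ⱼ² λⱼ² τ² / (1 + λⱼT)³ + 2 λⱼ² τ⁴ / (1 + λⱼT)² ) ≤ n ‖W̃‖∞⁴ ( 1/(2 R_nat²) + 1/R_nat ). (The left-hand side is exactly the variance of Σⱼ Xⱼ for independent Xⱼ = (mⱼ + sⱼ Gⱼ)² with Gⱼ standard normal, mⱼ = W̃ⱼ √λⱼ/(1 + λⱼT) and sⱼ² = λⱼ τ²/(1 + λⱼT).) -/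
open Real

/-- Scaling parameter `τ`, as a function of `λ`, `W̃` and `T`:
`τ = (T Σⱼ W̃ⱼ² λⱼ²/(1+λⱼT)²)^{1/2} (Σⱼ λⱼ/(1+λⱼT))^{-1/2}`. -/
noncomputable def tauDef {n : ℕ} (lam Wt : Fin n → ℝ) (T : ℝ) : ℝ :=
  Real.sqrt (T * ∑ j, (Wt j) ^ 2 * (lam j) ^ 2 / (1 + lam j * T) ^ 2) /
    Real.sqrt (∑ j, lam j / (1 + lam j * T))

/-- variance bound used in the single-codeword success analysis, with
`R_nat = R* ln 2` and `T = T_rc(λ, R*)` (the unique `T > 0` with `R_rc(λ, T) = R*`).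
The sup norm `‖·‖` on `Fin n → ℝ` is `‖·‖∞`. -/
theorem stmt_18 (n : ℕ) (Rstar : ℝ) (hRstar : 0 < Rstar)
    (lam Wt : Fin n → ℝ) (hlam : ∀ j, 0 ≤ lam j) (hsum : ∑ j, lam j = (n : ℝ))
    (T : ℝ) (hT : 0 < T) (hTR : Rrc lam T = Rstar) :
    ∑ j, (4 * (Wt j) ^ 2 * (lam j) ^ 2 * (tauDef lam Wt T) ^ 2 / (1 + lam j * T) ^ 3
          + 2 * (lam j) ^ 2 * (tauDef lam Wt T) ^ 4 / (1 + lam j * T) ^ 2)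
      ≤ (n : ℝ) * ‖Wt‖ ^ 4 *
          (1 / (2 * (Rstar * Real.log 2) ^ 2) + 1 / (Rstar * Real.log 2)) := by
  have hp : ∀ j, 0 < 1 + lam j * T := fun j => by
    have := mul_nonneg (hlam j) hT.le
    linarith
  have hl2 : 0 < Real.log 2 := Real.log_pos (by norm_num)
  have hn : 0 < (n : ℝ) := by
    rcases Nat.eq_zero_or_pos n with h | h
    · subst h
      simp [Rrc] at hTR
      linarith
    · exact_mod_cast h
  have hW : ∀ j, (Wt j) ^ 2 ≤ ‖Wt‖ ^ 2 := fun j => by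
    have h1 := norm_le_pi_norm Wt j
    have h2 : ‖Wt j‖ ^ 2 = (Wt j) ^ 2 := by rw [Real.norm_eq_abs, sq_abs]
    rw [← h2]
    gcongr
  set w := ‖Wt‖ ^ 2 with hw
  have hw0 : 0 ≤ w := by positivity
  -- rate bound
  set r := Rstar * Real.log 2 with hr
  have hr0 : 0 < r := mul_pos hRstar hl2
  have hrT : 2 * r ≤ T := by
    have e : 2 * (n : ℝ) * r = ∑ i, Real.log (1 + lam i * T) := by
      rw [hr, ← hTR, Rrc]
      simp only [Real.logb]
      rw [← Finset.sum_div]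
      generalize (∑ i, Real.log (1 + lam i * T)) = L
      field_simp
    have h2 : ∑ i, Real.log (1 + lam i * T) ≤ ∑ i, lam i * T :=
      Finset.sum_le_sum fun i _ => by
        have := Real.log_le_sub_one_of_pos (hp i)
        linarith
    rw [← Finset.sum_mul, hsum] at h2
    have h3 : (n : ℝ) * (2 * r) ≤ n * T := by linarith
    exact le_of_mul_le_mul_left h3 hn
  -- tau bound
  have hS : 0 ≤ ∑ j, lam j / (1 + lam j * T) :=
    Finset.sum_nonneg fun j _ => div_nonneg (hlam j) (hp j).le
  have hA : 0 ≤ T * ∑ j, (Wt j) ^ 2 * (lam j) ^ 2 / (1 + lam j * T) ^ 2 :=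
    mul_nonneg hT.le (Finset.sum_nonneg fun j _ => by positivity)
  have ht : (tauDef lam Wt T) ^ 2 ≤ w := by
    rw [tauDef, div_pow, Real.sq_sqrt hA, Real.sq_sqrt hS]
    apply div_le_of_le_mul₀ hS hw0
    rw [Finset.mul_sum, Finset.mul_sum]
    refine Finset.sum_le_sum fun j _ => ?_
    have hj := hp j
    have hlj := hlam j
    calc T * ((Wt j) ^ 2 * (lam j) ^ 2 / (1 + lam j * T) ^ 2)
        = (Wt j) ^ 2 * (lam j / (1 + lam j * T)) * (lam j * T / (1 + lam j * T)) := by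
          field_simp
      _ ≤ (Wt j) ^ 2 * (lam j / (1 + lam j * T)) * 1 := by
          gcongr
          rw [div_le_one hj]
          linarith
      _ ≤ w * (lam j / (1 + lam j * T)) := by
          rw [mul_one]
          gcongr
          exact hW j
  have e4 : (tauDef lam Wt T) ^ 4 = ((tauDef lam Wt T) ^ 2) ^ 2 := by ring
  rw [e4]
  set t := (tauDef lam Wt T) ^ 2 with htd
  have ht0 : 0 ≤ t := by positivity
  have key : ∀ j, 4 * (Wt j) ^ 2 * (lam j) ^ 2 * t / (1 + lam j * T) ^ 3
      + 2 * (lam j) ^ 2 * t ^ 2 / (1 + lam j * T) ^ 2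
      ≤ w ^ 2 * (2 / T) * lam j + w ^ 2 * (2 / T ^ 2) := fun j => by
    have hj := hp j
    have hlj := hlam j
    have hx : 0 ≤ lam j * T := mul_nonneg hlj hT.le
    apply add_le_add
    · calc 4 * (Wt j) ^ 2 * (lam j) ^ 2 * t / (1 + lam j * T) ^ 3
          ≤ 4 * w * (lam j) ^ 2 * w / (1 + lam j * T) ^ 3 := by
            gcongr
            exact hW j
        _ = w ^ 2 * (2 / T) * lam j * (2 * (lam j * T) / (1 + lam j * T) ^ 3) := by
            field_simp
            ring
        _ ≤ w ^ 2 * (2 / T) * lam j * 1 := by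
            gcongr
            rw [div_le_one (by positivity)]
            nlinarith [pow_nonneg hx 2, pow_nonneg hx 3]
        _ = _ := mul_one _
    · calc 2 * (lam j) ^ 2 * t ^ 2 / (1 + lam j * T) ^ 2
          ≤ 2 * (lam j) ^ 2 * w ^ 2 / (1 + lam j * T) ^ 2 := by gcongr
        _ = w ^ 2 * (2 / T ^ 2) * ((lam j * T) / (1 + lam j * T)) ^ 2 := by
            field_simp
        _ ≤ w ^ 2 * (2 / T ^ 2) * 1 ^ 2 := by
            gcongr
            rw [div_le_one hj]
            linarith
        _ = _ := by ring
  have hw4 : ‖Wt‖ ^ 4 = w ^ 2 := by rw [hw]; ring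
  rw [hw4]
  refine (Finset.sum_le_sum fun j _ => key j).trans ?_
  rw [Finset.sum_add_distrib, ← Finset.mul_sum, hsum]
  simp only [Finset.sum_const, Finset.card_univ, Fintype.card_fin, nsmul_eq_mul]
  have b1 : 2 / T ≤ 1 / r := by
    rw [div_le_div_iff₀ hT hr0]
    linarith
  have b2 : 2 / T ^ 2 ≤ 1 / (2 * r ^ 2) := by
    rw [div_le_div_iff₀ (by positivity) (by positivity)]
    nlinarith
  calc w ^ 2 * (2 / T) * n + n * (w ^ 2 * (2 / T ^ 2))
      = n * w ^ 2 * (2 / T ^ 2 + 2 / T) := by ring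
    _ ≤ _ := by gcongr
end

section
/- Fix a rate R > 0 and let λ ∈ ℝⁿ with λᵢ > 0 for all i. Let T = T_rc(λ, R), so that T is implicitly determined by R_rc(λ, T) = R. Then the map λ ↦ n 𝐃_rc(λ, R) is differentiable at λ and for every j its partial derivative equals 1/(1 + λⱼT)² + ( Σᵢ λᵢ²/(1 + λᵢT)² ) · ( T/(1 + λⱼT) ) / ( Σᵢ λᵢ/(1 + λᵢT) ), and this value lies in the interval [0, 2]. -/
open Real

/-- `T_rc(λ, R)`: the unique `T > 0` with `R_rc(λ, T) = R`. -/
noncomputable def Trc {n : ℕ} (lam : Fin n → ℝ) (R : ℝ) : ℝ :=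
  Classical.epsilon fun T => 0 < T ∧ Rrc lam T = R

/-- `𝐃_rc(λ, R) = D_rc(λ, T_rc(λ, R))`. -/
noncomputable def DDrc {n : ℕ} (lam : Fin n → ℝ) (R : ℝ) : ℝ :=
  Drc lam (Trc lam R)


/-- natural-log sum -/
noncomputable def Glog {n : ℕ} (p : (Fin n → ℝ) × ℝ) : ℝ := ∑ i, Real.log (1 + p.1 i * p.2)

lemma Rrc_eq_iff {n : ℕ} (hn : 0 < n) (l : Fin n → ℝ) (T R : ℝ) :
    Rrc l T = R ↔ Glog (l, T) = 2 * n * R * Real.log 2 := by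
  have hn' : (0 : ℝ) < n := by exact_mod_cast hn
  have h2 : 0 < Real.log 2 := Real.log_pos (by norm_num)
  have : Rrc l T = Glog (l, T) / (2 * n * Real.log 2) := by
    simp only [Rrc, Glog, Real.logb, ← Finset.sum_div]
    generalize ∑ i, Real.log (1 + l i * T) = A
    field_simp
  rw [this, div_eq_iff (by positivity)]
  constructor <;> intro h <;> rw [h] <;> ring

lemma Glog_strictMono {n : ℕ} (hn : 0 < n) (l : Fin n → ℝ) (hl : ∀ i, 0 < l i) {s t : ℝ}
    (hs : 0 < s) (hst : s < t) : Glog (l, s) < Glog (l, t) := by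
  haveI : Nonempty (Fin n) := ⟨⟨0, hn⟩⟩
  unfold Glog
  apply Finset.sum_lt_sum_of_nonempty Finset.univ_nonempty
  intro i _
  have := hl i
  apply Real.log_lt_log
  · simp only; positivity
  · simp only; gcongr

lemma Trc_eq {n : ℕ} (hn : 0 < n) (l : Fin n → ℝ) (hl : ∀ i, 0 < l i) {R T : ℝ}
    (hT : 0 < T) (h : Rrc l T = R) : Trc l R = T := by
  have hs : 0 < Trc l R ∧ Rrc l (Trc l R) = R :=
    Classical.epsilon_spec (p := fun T => 0 < T ∧ Rrc l T = R) ⟨T, hT, h⟩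
  have h1 := (Rrc_eq_iff hn l _ _).1 h
  have h2 := (Rrc_eq_iff hn l _ _).1 hs.2
  rcases lt_trichotomy (Trc l R) T with h3 | h3 | h3
  · have := Glog_strictMono hn l hl hs.1 h3
    linarith
  · exact h3
  · have := Glog_strictMono hn l hl hT h3
    linarith

lemma Trc_spec {n : ℕ} (hn : 0 < n) (l : Fin n → ℝ) (hl : ∀ i, 0 < l i) {R : ℝ}
    (hR : 0 < R) : 0 < Trc l R ∧ Rrc l (Trc l R) = R := by
  apply Classical.epsilon_spec (p := fun T => 0 < T ∧ Rrc l T = R)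
  have hn' : (0 : ℝ) < n := by exact_mod_cast hn
  have h2 : 0 < Real.log 2 := Real.log_pos (by norm_num)
  set C := 2 * n * R * Real.log 2 with hC
  have hCp : 0 < C := by positivity
  let i0 : Fin n := ⟨0, hn⟩
  have hi0 := hl i0
  set B := Real.exp C / l i0 with hB
  have hBp : 0 < B := by positivity
  have hcont : ContinuousOn (fun t => Glog (l, t)) (Set.Icc 0 B) := by
    unfold Glog
    apply continuousOn_finset_sum
    intro i _
    apply ContinuousOn.log
    · fun_prop
    · intro t ht
      have := mul_nonneg (hl i).le ht.1
      simp only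
      linarith
  have hmem : C ∈ Set.Icc (Glog (l, 0)) (Glog (l, B)) := by
    constructor
    · simp [Glog, hCp.le]
    · calc C = Real.log (Real.exp C) := (Real.log_exp C).symm
        _ ≤ Real.log (1 + l i0 * B) := by
          apply Real.log_le_log (Real.exp_pos _)
          rw [hB, mul_div_cancel₀ _ hi0.ne']
          linarith
        _ ≤ Glog (l, B) := by
          unfold Glog
          apply Finset.single_le_sum (f := fun i => Real.log (1 + l i * B)) _ (Finset.mem_univ i0)
          intro i _
          apply Real.log_nonneg
          have := mul_nonneg (hl i).le hBp.le
          linarith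
  obtain ⟨T, hT, hTe⟩ := intermediate_value_Icc hBp.le hcont hmem
  refine ⟨T, ?_, (Rrc_eq_iff hn l T R).2 hTe⟩
  rcases hT.1.lt_or_eq with h | h
  · exact h
  · exfalso
    rw [← h] at hTe
    simp [Glog] at hTe
    linarith

lemma Glog_hasStrictFDerivAt {n : ℕ} (l : Fin n → ℝ) (T : ℝ) (h : ∀ i, 0 < 1 + l i * T) :
    HasStrictFDerivAt (Glog (n := n))
      (∑ i, (1 + l i * T)⁻¹ • (l i • ContinuousLinearMap.snd ℝ (Fin n → ℝ) ℝ
        + T • (ContinuousLinearMap.proj i : (Fin n → ℝ) →L[ℝ] ℝ).comp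
            (ContinuousLinearMap.fst ℝ (Fin n → ℝ) ℝ))) (l, T) := by
  unfold Glog
  apply HasStrictFDerivAt.fun_sum
  intro i _
  have h1 : HasStrictFDerivAt (fun p : (Fin n → ℝ) × ℝ => p.1 i)
      ((ContinuousLinearMap.proj i : (Fin n → ℝ) →L[ℝ] ℝ).comp
            (ContinuousLinearMap.fst ℝ (Fin n → ℝ) ℝ)) (l, T) :=
    ((ContinuousLinearMap.proj i : (Fin n → ℝ) →L[ℝ] ℝ).comp
            (ContinuousLinearMap.fst ℝ (Fin n → ℝ) ℝ)).hasStrictFDerivAt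
  have h2 : HasStrictFDerivAt (fun p : (Fin n → ℝ) × ℝ => p.2)
      (ContinuousLinearMap.snd ℝ (Fin n → ℝ) ℝ) (l, T) := hasStrictFDerivAt_snd
  exact ((h1.mul h2).const_add 1).log (h i).ne'

lemma exists_implicit {n : ℕ} (hn : 0 < n) (R : ℝ) (hR : 0 < R)
    (lam : Fin n → ℝ) (hlam : ∀ i, 0 < lam i) :
    ∃ f' : (Fin n → ℝ) →L[ℝ] ℝ, HasFDerivAt (fun l => Trc l R) f' lam ∧
      ∀ v, (∑ i, lam i / (1 + lam i * Trc lam R)) * f' v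
        = - ∑ i, Trc lam R / (1 + lam i * Trc lam R) * v i := by
  obtain ⟨hT, hTR⟩ := Trc_spec hn lam hlam hR
  set T := Trc lam R with hTdef
  have hpos : ∀ i, 0 < 1 + lam i * T := fun i => by have := hlam i; positivity
  haveI : Nonempty (Fin n) := ⟨⟨0, hn⟩⟩
  have hS : 0 < ∑ i, lam i / (1 + lam i * T) :=
    Finset.sum_pos (fun i _ => div_pos (hlam i) (hpos i)) Finset.univ_nonempty
  have hG := Glog_hasStrictFDerivAt lam T hpos
  set G' := (∑ i, (1 + lam i * T)⁻¹ • (lam i • ContinuousLinearMap.snd ℝ (Fin n → ℝ) ℝ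
        + T • (ContinuousLinearMap.proj i : (Fin n → ℝ) →L[ℝ] ℝ).comp
            (ContinuousLinearMap.fst ℝ (Fin n → ℝ) ℝ))) with hG'
  have hG'v : ∀ v t, G' (v, t) = (∑ i, lam i / (1 + lam i * T)) * t
      + ∑ i, T / (1 + lam i * T) * v i := by
    intro v t
    simp only [hG', ContinuousLinearMap.sum_apply, ContinuousLinearMap.smul_apply,
      ContinuousLinearMap.add_apply, ContinuousLinearMap.comp_apply,
      ContinuousLinearMap.coe_snd', ContinuousLinearMap.coe_fst', ContinuousLinearMap.proj_apply,
      smul_eq_mul]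
    rw [Finset.sum_mul, ← Finset.sum_add_distrib]
    apply Finset.sum_congr rfl
    intro i _
    ring
  have hinv : (G' ∘L .inr ℝ (Fin n → ℝ) ℝ).IsInvertible := by
    refine ⟨ContinuousLinearEquiv.unitsEquivAut ℝ (Units.mk0 _ hS.ne'), ?_⟩
    ext
    simp [hG'v]
  set ψ := hG.implicitFunctionOfProdDomain hinv with hψ
  have hd := (hG.hasStrictFDerivAt_implicitFunctionOfProdDomain hinv).hasFDerivAt
  have ht := hG.tendsto_implicitFunctionOfProdDomain hinv
  have he := hG.eventually_apply_implicitFunctionOfProdDomain hinv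
  rw [← hψ] at hd ht he
  simp only at hd ht he
  set f' := (-(G' ∘L .inr ℝ (Fin n → ℝ) ℝ).inverse ∘L (G' ∘L .inl ℝ (Fin n → ℝ) ℝ))
  have hposl : ∀ᶠ l in nhds lam, ∀ i, 0 < l i := by
    rw [Filter.eventually_all]
    intro i
    exact (continuous_apply i).continuousAt.eventually (lt_mem_nhds (hlam i))
  have heq : (fun l => Trc l R) =ᶠ[nhds lam] ψ := by
    filter_upwards [hposl, he, ht.eventually (lt_mem_nhds hT)] with l h1 h2 h3
    apply Trc_eq hn l h1 h3
    rw [Rrc_eq_iff hn, h2, ← Rrc_eq_iff hn, hTR]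
  refine ⟨f', hd.congr_of_eventuallyEq heq, ?_⟩
  have hψl : ψ lam = T := heq.eq_of_nhds.symm
  have hc : HasFDerivAt (fun l => Glog (l, ψ l)) (G'.comp ((ContinuousLinearMap.id ℝ _).prod f')) lam := by
    have hG2 := hG.hasFDerivAt
    rw [← hψl] at hG2
    exact HasFDerivAt.comp lam hG2 ((hasFDerivAt_id lam).prodMk hd)
  have hc2 : HasFDerivAt (fun l => Glog (l, ψ l)) (0 : (Fin n → ℝ) →L[ℝ] ℝ) lam :=
    (hasFDerivAt_const (Glog (lam, T)) lam).congr_of_eventuallyEq he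
  intro v
  have h0 := congrArg (fun L => L v) (hc.unique hc2)
  simp only [ContinuousLinearMap.comp_apply, ContinuousLinearMap.prod_apply, hG'v,
    ContinuousLinearMap.id_apply, ContinuousLinearMap.zero_apply] at h0
  linarith

/-- differentiability of `λ ↦ n 𝐃_rc(λ, R)` with explicit partial
derivatives, each lying in `[0, 2]`.  Writing `T = T_rc(λ, R)`, the `j`-th partial
derivative is `1/(1+λⱼT)² + (Σᵢ λᵢ²/(1+λᵢT)²) (T/(1+λⱼT)) / (Σᵢ λᵢ/(1+λᵢT))`. -/
theorem stmt_19 (n : ℕ) (R : ℝ) (hR : 0 < R)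
    (lam : Fin n → ℝ) (hlam : ∀ i, 0 < lam i) :
    HasFDerivAt (fun l : Fin n → ℝ => (n : ℝ) * DDrc l R)
      (∑ j, (1 / (1 + lam j * Trc lam R) ^ 2
            + (∑ i, (lam i) ^ 2 / (1 + lam i * Trc lam R) ^ 2)
              * (Trc lam R / (1 + lam j * Trc lam R))
              / (∑ i, lam i / (1 + lam i * Trc lam R)))
          • (ContinuousLinearMap.proj j : (Fin n → ℝ) →L[ℝ] ℝ)) lam
    ∧ ∀ j : Fin n,
        (1 / (1 + lam j * Trc lam R) ^ 2
          + (∑ i, (lam i) ^ 2 / (1 + lam i * Trc lam R) ^ 2)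
            * (Trc lam R / (1 + lam j * Trc lam R))
            / (∑ i, lam i / (1 + lam i * Trc lam R))) ∈ Set.Icc (0 : ℝ) 2 := by
  rcases Nat.eq_zero_or_pos n with rfl | hn
  · refine ⟨?_, fun j => j.elim0⟩
    exact hasFDerivAt_of_subsingleton _ _ |>.congr_fderiv (by ext; simp)
  obtain ⟨hT, hTR⟩ := Trc_spec hn lam hlam hR
  obtain ⟨f', hf', hv⟩ := exists_implicit hn R hR lam hlam
  set T := Trc lam R with hTdef
  have hpos : ∀ i, 0 < 1 + lam i * T := fun i => by have := hlam i; positivity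
  haveI : Nonempty (Fin n) := ⟨⟨0, hn⟩⟩
  have hS : 0 < ∑ i, lam i / (1 + lam i * T) :=
    Finset.sum_pos (fun i _ => div_pos (hlam i) (hpos i)) Finset.univ_nonempty
  have hQ : (∑ i, (lam i) ^ 2 / (1 + lam i * T) ^ 2) * T ≤ ∑ i, lam i / (1 + lam i * T) := by
    rw [Finset.sum_mul]
    apply Finset.sum_le_sum
    intro i _
    have h1 := hlam i
    have h2 := hpos i
    rw [div_mul_eq_mul_div, div_le_div_iff₀ (by positivity) h2]
    have : 0 ≤ lam i * (1 + lam i * T) := by positivity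
    nlinarith
  have hQ0 : 0 ≤ ∑ i, (lam i) ^ 2 / (1 + lam i * T) ^ 2 :=
    Finset.sum_nonneg fun i _ => by positivity
  set S := ∑ i, lam i / (1 + lam i * T) with hSdef
  set Q := ∑ i, (lam i) ^ 2 / (1 + lam i * T) ^ 2 with hQdef
  refine ⟨?_, ?_⟩
  · have hfun : (fun l : Fin n → ℝ => (n : ℝ) * DDrc l R)
        = fun l => ∑ i, l i * (1 + l i * Trc l R)⁻¹ := by
      funext l
      have hn' : (n : ℝ) ≠ 0 := by exact_mod_cast hn.ne'
      simp only [DDrc, Drc, div_eq_mul_inv]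
      rw [← mul_assoc, one_mul, mul_inv_cancel₀ hn', one_mul]
    rw [hfun]
    have hsum : HasFDerivAt (fun l : Fin n → ℝ => ∑ i, l i * (1 + l i * Trc l R)⁻¹)
        (∑ i, ((1 / (1 + lam i * T) ^ 2) • (ContinuousLinearMap.proj i : (Fin n → ℝ) →L[ℝ] ℝ)
          - ((lam i) ^ 2 / (1 + lam i * T) ^ 2) • f')) lam := by
      apply HasFDerivAt.fun_sum
      intro i _
      have hp : HasFDerivAt (fun l : Fin n → ℝ => l i)
        (ContinuousLinearMap.proj i : (Fin n → ℝ) →L[ℝ] ℝ) lam := hasFDerivAt_apply i lam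
      have hden := (hp.mul hf').const_add 1
      have hi := (hasDerivAt_inv (hpos i).ne').comp_hasFDerivAt lam hden
      have := hp.mul hi
      refine this.congr_fderiv ?_
      ext v
      have := (hpos i).ne'
      simp [← hTdef]
      field_simp
      ring
    refine hsum.congr_fderiv ?_
    apply ContinuousLinearMap.ext
    intro v
    have hv' := hv v
    have hf : f' v = -(∑ i, T / (1 + lam i * T) * v i) / S := by
      rw [eq_div_iff hS.ne', ← hv', mul_comm]
    simp only [ContinuousLinearMap.sum_apply, ContinuousLinearMap.smul_apply,
      ContinuousLinearMap.sub_apply, ContinuousLinearMap.proj_apply, smul_eq_mul, add_mul,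
      Finset.sum_add_distrib, Finset.sum_sub_distrib]
    rw [← Finset.sum_mul, ← hQdef, hf, sub_eq_add_neg]
    congr 1
    rw [neg_div, mul_neg, neg_neg, Finset.sum_div, Finset.mul_sum]
    apply Finset.sum_congr rfl
    intro i _
    ring
  · intro j
    have h1 := hlam j
    have h2 := hpos j
    have h3 : 1 ≤ 1 + lam j * T := by have := mul_pos h1 hT; linarith
    refine ⟨by positivity, ?_⟩
    have ha : 1 / (1 + lam j * T) ^ 2 ≤ 1 := by
      rw [div_le_one (by positivity)]
      exact one_le_pow₀ h3
    have hb : Q * (T / (1 + lam j * T)) / S ≤ 1 := by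
      rw [div_le_one hS, ← mul_div_assoc, div_le_iff₀ h2]
      nlinarith
    linarith
end
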